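/- Let n ≥ d ≥ 1 be integers, let E ⊆ ℝ^n be a Borel set such that the measure H^d|_E is locally finite, and let F ⊆ E be a d-rectifiable set. Then for H^d-almost every x ∈ F, lim_{r→0} α_{H^d|_E}(x,r) = 0. -/

import Mathlib

open MeasureTheory Metric Filter
open scoped ENNReal NNReal

noncomputable section

/-- `bbeta d E x r` is the quantity `bβ_E(x,r)`: the infimum over all `d`-dimensional
affine planes `V ⊆ ℝ^{d+1}` of
`sup_{y ∈ E ∩ B(x,r)} dist(y,V)/r + sup_{y ∈ V ∩ B(x,r)} dist(y,E)/r`,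
where suprema over empty sets are `0` (which is `Real.sSup`'s junk value). -/
def bbeta (d : ℕ) (E : Set (EuclideanSpace ℝ (Fin (d+1))))
    (x : EuclideanSpace ℝ (Fin (d+1))) (r : ℝ) : ℝ :=
  sInf { t : ℝ | ∃ V : AffineSubspace ℝ (EuclideanSpace ℝ (Fin (d+1))),
    (V : Set (EuclideanSpace ℝ (Fin (d+1)))).Nonempty ∧
    Module.finrank ℝ V.direction = d ∧
    t = sSup ((fun y => infDist y (V : Set (EuclideanSpace ℝ (Fin (d+1))))) ''
          (E ∩ closedBall x r)) / r
      + sSup ((fun y => infDist y E) ''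
          ((V : Set (EuclideanSpace ℝ (Fin (d+1)))) ∩ closedBall x r)) / r }

/-- `FDist μ ν B = sup_f |∫ f dμ − ∫ f dν|`, the supremum over all nonnegative
1-Lipschitz functions `f` supported in `B`. -/
def FDist {n : ℕ} (μ ν : Measure (EuclideanSpace ℝ (Fin n)))
    (B : Set (EuclideanSpace ℝ (Fin n))) : ℝ :=
  sSup { t : ℝ | ∃ f : EuclideanSpace ℝ (Fin n) → ℝ,
    LipschitzWith 1 f ∧ (∀ x, 0 ≤ f x) ∧ Function.support f ⊆ B ∧
    t = |(∫ x, f x ∂μ) - ∫ x, f x ∂ν| }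

/-- `alphaV d μ x r V = r^{-d-1} · inf_{c>0} F_{B(x,r)}(μ, c·H^d|_V)`. -/
def alphaV (d : ℕ) {n : ℕ} (μ : Measure (EuclideanSpace ℝ (Fin n)))
    (x : EuclideanSpace ℝ (Fin n)) (r : ℝ)
    (V : AffineSubspace ℝ (EuclideanSpace ℝ (Fin n))) : ℝ :=
  r ^ (-(d : ℝ) - 1) *
    sInf { t : ℝ | ∃ c : ℝ, 0 < c ∧
      t = FDist μ (ENNReal.ofReal c •
            (μH[(d : ℝ)]).restrict (V : Set (EuclideanSpace ℝ (Fin n))))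
          (closedBall x r) }

/-- `alphaA d μ x r = inf_V alphaV d μ x r V` over all `d`-dimensional affine planes `V`. -/
def alphaA (d : ℕ) {n : ℕ} (μ : Measure (EuclideanSpace ℝ (Fin n)))
    (x : EuclideanSpace ℝ (Fin n)) (r : ℝ) : ℝ :=
  sInf { t : ℝ | ∃ V : AffineSubspace ℝ (EuclideanSpace ℝ (Fin n)),
    (V : Set (EuclideanSpace ℝ (Fin n))).Nonempty ∧
    Module.finrank ℝ V.direction = d ∧ t = alphaV d μ x r V }

/-- `E` is Ahlfors `s`-regular with constant `C₁`:
`C₁⁻¹ r^s ≤ H^s(E ∩ B(x,r)) ≤ C₁ r^s` for all `x ∈ E` and `0 < r < diam E`. -/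
def AhlforsRegular {n : ℕ} (s C₁ : ℝ) (E : Set (EuclideanSpace ℝ (Fin n))) : Prop :=
  ∀ x ∈ E, ∀ r : ℝ, 0 < r → ENNReal.ofReal r < EMetric.diam E →
    ENNReal.ofReal (C₁⁻¹ * r ^ s) ≤ μH[s] (E ∩ closedBall x r) ∧
    μH[s] (E ∩ closedBall x r) ≤ ENNReal.ofReal (C₁ * r ^ s)

/-- The `t`-dimensional Hausdorff content `H^t_∞(A)`: the infimum of `∑ (diam U_i)^t`
over countable covers of `A` by arbitrary sets. -/
def hContent {n : ℕ} (t : ℝ) (A : Set (EuclideanSpace ℝ (Fin n))) : ℝ≥0∞ :=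
  ⨅ (U : ℕ → Set (EuclideanSpace ℝ (Fin n))) (_ : A ⊆ ⋃ i, U i),
    ∑' i, EMetric.diam (U i) ^ t

/-- `F ⊆ ℝ^n` is `d`-rectifiable: `H^d(F) < ∞` and `F` can be covered, up to an
`H^d`-null set, by countably many Lipschitz images of `ℝ^d`. -/
def DRectifiable (d : ℕ) {n : ℕ} (F : Set (EuclideanSpace ℝ (Fin n))) : Prop :=
  μH[(d : ℝ)] F < ⊤ ∧
  ∃ f : ℕ → (EuclideanSpace ℝ (Fin d) → EuclideanSpace ℝ (Fin n)),
    (∀ i, ∃ K : ℝ≥0, LipschitzWith K (f i)) ∧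
    μH[(d : ℝ)] (F \ ⋃ i, Set.range (f i)) = 0

end

section Aux
open Set Topology

lemma aux_isHaar (d : ℕ) :
    (μH[(d : ℝ)] : Measure (EuclideanSpace ℝ (Fin d))).IsAddHaarMeasure := by
  have h := isAddHaarMeasure_hausdorffMeasure (E := EuclideanSpace ℝ (Fin d))
  rwa [finrank_euclideanSpace_fin] at h

lemma aux_affine_map {d n : ℕ} (A : EuclideanSpace ℝ (Fin d) →L[ℝ] EuclideanSpace ℝ (Fin n))
    (hA : Function.Injective A) (p : EuclideanSpace ℝ (Fin d)) (x : EuclideanSpace ℝ (Fin n)) :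
    ∃ V : AffineSubspace ℝ (EuclideanSpace ℝ (Fin n)),
      (V : Set (EuclideanSpace ℝ (Fin n))).Nonempty ∧ Module.finrank ℝ V.direction = d ∧
      ∃ c : ℝ, 0 < c ∧
        Measure.map (fun y => x + A (y - p)) (μH[(d : ℝ)]) =
          ENNReal.ofReal c • (μH[(d : ℝ)]).restrict (V : Set (EuclideanSpace ℝ (Fin n))) := by
  have hH := aux_isHaar d
  let W := LinearMap.range (A : EuclideanSpace ℝ (Fin d) →ₗ[ℝ] EuclideanSpace ℝ (Fin n))
  let e : EuclideanSpace ℝ (Fin d) ≃ₗ[ℝ] W := LinearEquiv.ofInjective _ hA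
  let e' : EuclideanSpace ℝ (Fin d) ≃L[ℝ] W := e.toContinuousLinearEquiv
  have hW : Module.finrank ℝ W = d := by rw [← e.finrank_eq]; simp
  have hH2 : (μH[(d : ℝ)] : Measure W).IsAddHaarMeasure := by
    have h := isAddHaarMeasure_hausdorffMeasure (E := W)
    rwa [hW] at h
  have hH3 : (Measure.map e' (μH[(d : ℝ)])).IsAddHaarMeasure := e'.isAddHaarMeasure_map _
  let i : W → EuclideanSpace ℝ (Fin n) := fun w => x + w
  have hi : Isometry i := by
    intro a b
    simp [i, edist_add_left]
    rfl
  have hu := Measure.isAddLeftInvariant_eq_smul (Measure.map e' (μH[(d : ℝ)])) (μH[(d : ℝ)])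
  set c := Measure.addHaarScalarFactor (Measure.map e' (μH[(d : ℝ)])) (μH[(d : ℝ)]) with hc
  have hcpos : 0 < c := Measure.addHaarScalarFactor_pos_of_isAddHaarMeasure _ _
  have hr : range i = (AffineSubspace.mk' x W : Set (EuclideanSpace ℝ (Fin n))) := by
    ext y
    simp only [mem_range, SetLike.mem_coe, AffineSubspace.mem_mk', i]
    constructor
    · rintro ⟨w, rfl⟩; simp
    · intro h; exact ⟨⟨_, h⟩, by simp⟩
  refine ⟨AffineSubspace.mk' x W, ⟨x, by simp⟩, by rw [AffineSubspace.direction_mk']; exact hW, c, by exact_mod_cast hcpos, ?_⟩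
  rw [← hr, ← hi.map_hausdorffMeasure (Or.inl (by positivity))]
  have h1 : (fun y => x + A (y - p)) = i ∘ (e' ∘ (fun y => y - p)) := rfl
  rw [h1, ← Measure.map_map hi.continuous.measurable (by fun_prop),
    ← Measure.map_map (by fun_prop) (by fun_prop), map_sub_right_eq_self, hu,
    Measure.map_smul]
  rw [ENNReal.ofReal_coe_nnreal]
  rfl

lemma aux_bound {n : ℕ} (hn : 1 ≤ n) (f : EuclideanSpace ℝ (Fin n) → ℝ)
    (hf : LipschitzWith 1 f) (x : EuclideanSpace ℝ (Fin n)) {r : ℝ} (hr : 0 < r)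
    (hs : Function.support f ⊆ closedBall x r) (y : EuclideanSpace ℝ (Fin n)) : f y ≤ 3 * r := by
  by_cases hy : y ∈ closedBall x r
  · have : Nontrivial (EuclideanSpace ℝ (Fin n)) := by
      have : Nonempty (Fin n) := ⟨⟨0, hn⟩⟩
      infer_instance
    obtain ⟨v, hv⟩ := exists_norm_eq (EuclideanSpace ℝ (Fin n)) (c := 2 * r) (by positivity)
    have h0 : f (x + v) = 0 := by
      by_contra h
      have := hs h
      simp [hv] at this
      linarith
    have h1 := hf.dist_le_mul y (x + v)
    have h2 : dist y (x + v) ≤ dist y x + dist x (x + v) := dist_triangle _ _ _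
    have h3 : dist x (x + v) = 2 * r := by simp [hv]
    rw [h0, Real.dist_eq] at h1
    have := le_abs_self (f y - 0)
    simp at hy h1 this
    linarith
  · have : f y = 0 := by
      by_contra h
      exact hy (hs h)
    rw [this]; positivity

lemma aux_sard_linear {d n : ℕ} (A : EuclideanSpace ℝ (Fin d) →L[ℝ] EuclideanSpace ℝ (Fin n))
    (hA : ¬ Function.Injective A) {ε : ℝ} (hε : 0 < ε) :
    ∃ δ : ℝ≥0, δ ≠ 0 ∧ ∀ (g : EuclideanSpace ℝ (Fin d) → EuclideanSpace ℝ (Fin n))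
      (S : Set (EuclideanSpace ℝ (Fin d))), ApproximatesLinearOn g A S δ →
      μH[(d : ℝ)] (g '' S) ≤ ENNReal.ofReal ε * μH[(d : ℝ)] S := by
  have hH := aux_isHaar d
  obtain ⟨e, he, hAe⟩ : ∃ e : EuclideanSpace ℝ (Fin d), ‖e‖ = 1 ∧ A e = 0 := by
    rw [injective_iff_map_eq_zero] at hA
    push Not at hA
    obtain ⟨v, hv, hv0⟩ := hA
    refine ⟨(‖v‖⁻¹ : ℝ) • v, ?_, by simp [hv]⟩
    simp [norm_smul, hv0]
  let D : ℝ → (EuclideanSpace ℝ (Fin d) →L[ℝ] EuclideanSpace ℝ (Fin d)) := fun t =>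
    ContinuousLinearMap.id ℝ _ - (1 - t) • (innerSL ℝ e).smulRight e
  have hD : ∀ t z, D t z = z - ((1 - t) * inner ℝ e z) • e := by
    intro t z; simp [D, mul_smul]
  have hDc : Continuous fun t => |(D t).det| := by
    apply Continuous.abs
    apply ContinuousLinearMap.continuous_det.comp
    fun_prop
  have hD0 : (D 0).det = 0 := by
    by_contra h
    have h1 : LinearMap.det (D 0 : EuclideanSpace ℝ (Fin d) →ₗ[ℝ] EuclideanSpace ℝ (Fin d)) ≠ 0 := h
    have h2 := LinearMap.bot_lt_ker_of_det_eq_zero (f := (D 0 : EuclideanSpace ℝ (Fin d) →ₗ[ℝ] EuclideanSpace ℝ (Fin d)))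
    have h3 := (LinearMap.equivOfDetNeZero _ h1).injective
    have h4 : D 0 e = 0 := by rw [hD]; simp [he]
    have h5 : e = 0 := h3 (by simpa using h4)
    simp [h5] at he
  set M : ℝ := ‖A‖ + 1 with hM
  have hMpos : 0 < M := by positivity
  obtain ⟨t, ht0, ht1, ht⟩ : ∃ t : ℝ, 0 < t ∧ t ≤ 1 ∧ M ^ d * |(D t).det| ≤ ε := by
    have h1 : Tendsto (fun t => M ^ d * |(D t).det|) (𝓝[>] 0) (𝓝 (M ^ d * |(D 0).det|)) :=
      ((continuous_const.mul hDc).tendsto 0).mono_left nhdsWithin_le_nhds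
    rw [hD0, abs_zero, mul_zero] at h1
    have h2 := h1.eventually (gt_mem_nhds hε)
    have h3 : ∀ᶠ t : ℝ in 𝓝[>] 0, t ∈ Ioc (0 : ℝ) 1 := Ioc_mem_nhdsGT one_pos
    obtain ⟨t, ha, hb⟩ := (h2.and h3).exists
    exact ⟨t, hb.1, hb.2, ha.le⟩
  have hlow : ∀ z, t * ‖z‖ ≤ ‖D t z‖ := by
    intro z
    have h1 : (t * ‖z‖) ^ 2 ≤ ‖D t z‖ ^ 2 := by
      rw [hD, norm_sub_sq_real, norm_smul, he, inner_smul_right, real_inner_comm e z, mul_pow]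
      set s := inner ℝ e z with hs
      have h2 : s ^ 2 ≤ ‖z‖ ^ 2 := by
        rw [sq_le_sq, abs_norm]
        simpa [he] using abs_real_inner_le_norm e z
      simp only [mul_one, Real.norm_eq_abs, sq_abs]
      have h4 : 0 ≤ 1 - t ^ 2 := by nlinarith
      nlinarith [mul_nonneg h4 (sub_nonneg.2 h2)]
    exact le_of_sq_le_sq h1 (norm_nonneg _)
  have hinj : Function.Injective (D t) := by
    rw [injective_iff_map_eq_zero]
    intro z hz
    have := hlow z
    rw [hz, norm_zero] at this
    have h3 : ‖z‖ ≤ 0 := by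
      by_contra hh
      push Not at hh
      nlinarith [mul_pos ht0 hh]
    simpa using h3
  have hAD : ∀ z, A (D t z) = A z := by
    intro z; rw [hD]; simp [hAe]
  refine ⟨t.toNNReal, by simpa using ht0, ?_⟩
  intro g S hg
  have hL : LipschitzOnWith M.toNNReal (g ∘ Function.invFun (D t)) (D t '' S) := by
    apply LipschitzOnWith.of_dist_le_mul
    rintro _ ⟨a, ha, rfl⟩ _ ⟨b, hb, rfl⟩
    simp only [Function.comp, Function.leftInverse_invFun hinj _, dist_eq_norm, Real.coe_toNNReal _ hMpos.le]
    have h1 := hg a ha b hb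
    rw [← map_sub]
    have h2 : ‖g a - g b‖ ≤ ‖g a - g b - A (a - b)‖ + ‖A (a - b)‖ := by
      simpa using norm_add_le (g a - g b - A (a - b)) (A (a - b))
    have h3 := hlow (a - b)
    have h4 := A.le_opNorm (D t (a - b))
    rw [hAD] at h4
    rw [Real.coe_toNNReal _ ht0.le] at h1
    rw [hM, add_mul, one_mul]
    linarith
  have himg : g '' S = (g ∘ Function.invFun (D t)) '' (D t '' S) := by
    rw [image_image]
    simp only [Function.comp, Function.leftInverse_invFun hinj _]
  rw [himg]
  refine (hL.hausdorffMeasure_image_le (by positivity)).trans ?_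
  rw [Measure.addHaar_image_continuousLinearMap, ← mul_assoc]
  gcongr
  rw [ENNReal.rpow_natCast]
  have : (M.toNNReal : ℝ≥0∞) = ENNReal.ofReal M := rfl
  rw [this, ← ENNReal.ofReal_pow hMpos.le, ← ENNReal.ofReal_mul (by positivity)]
  exact ENNReal.ofReal_le_ofReal ht

lemma aux_sard {d n : ℕ} (f : EuclideanSpace ℝ (Fin d) → EuclideanSpace ℝ (Fin n)) :
    μH[(d : ℝ)] (f '' {y | DifferentiableAt ℝ f y ∧ ¬ Function.Injective (fderiv ℝ f y)}) = 0 := by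
  have hH := aux_isHaar d
  set S := {y | DifferentiableAt ℝ f y ∧ ¬ Function.Injective (fderiv ℝ f y)} with hS
  have hSU : S = ⋃ k : ℕ, S ∩ closedBall 0 k := by
    rw [← inter_iUnion, iUnion_closedBall_nat, inter_univ]
  rw [hSU, image_iUnion, measure_iUnion_null_iff]
  intro k
  set T := S ∩ closedBall 0 (k : ℝ) with hT
  have hTfin : μH[(d : ℝ)] T < ∞ := (measure_mono inter_subset_right).trans_lt measure_closedBall_lt_top
  have key : ∀ ε : ℝ, 0 < ε → μH[(d : ℝ)] (f '' T) ≤ ENNReal.ofReal ε * μH[(d : ℝ)] T := by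
    intro ε hε
    rcases T.eq_empty_or_nonempty with h0 | hne
    · simp [h0]
    have hex : ∀ A : EuclideanSpace ℝ (Fin d) →L[ℝ] EuclideanSpace ℝ (Fin n), ∃ δ : ℝ≥0, δ ≠ 0 ∧
        (¬ Function.Injective A → ∀ (g : EuclideanSpace ℝ (Fin d) → EuclideanSpace ℝ (Fin n))
      (S : Set (EuclideanSpace ℝ (Fin d))), ApproximatesLinearOn g A S δ →
      μH[(d : ℝ)] (g '' S) ≤ ENNReal.ofReal ε * μH[(d : ℝ)] S) := by
      intro A
      by_cases hA : Function.Injective A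
      · exact ⟨1, one_ne_zero, fun h => absurd hA h⟩
      · obtain ⟨δ, h1, h2⟩ := aux_sard_linear A hA hε
        exact ⟨δ, h1, fun _ => h2⟩
    choose δ hδ0 hδ using hex
    obtain ⟨t, A, hdisj, htm, hcov, happ, hAn⟩ :=
      exists_partition_approximatesLinearOn_of_hasFDerivWithinAt f T (fderiv ℝ f)
        (fun x hx => hx.1.1.hasFDerivAt.hasFDerivWithinAt) δ hδ0
    have h1 : f '' T ⊆ ⋃ j, f '' (T ∩ t j) := by
      rw [← image_iUnion, ← inter_iUnion]
      exact image_mono (subset_inter subset_rfl hcov)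
    calc μH[(d : ℝ)] (f '' T) ≤ ∑' j, μH[(d : ℝ)] (f '' (T ∩ t j)) :=
          (measure_mono h1).trans (measure_iUnion_le _)
      _ ≤ ∑' j, ENNReal.ofReal ε * μH[(d : ℝ)] (T ∩ t j) := by
          gcongr with j
          obtain ⟨y, hy, hAy⟩ := hAn hne j
          exact hδ (A j) (by rw [hAy]; exact hy.1.2) f _ (happ j)
      _ = ENNReal.ofReal ε * ∑' j, (μH[(d : ℝ)]).restrict T (t j) := by
          rw [ENNReal.tsum_mul_left]
          congr 2; ext j
          rw [Measure.restrict_apply (htm j), inter_comm]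
      _ = ENNReal.ofReal ε * (μH[(d : ℝ)]).restrict T (⋃ j, t j) := by
          rw [measure_iUnion hdisj htm]
      _ ≤ ENNReal.ofReal ε * μH[(d : ℝ)] T := by
          refine mul_le_mul_right ?_ _
          exact (measure_mono (subset_univ _)).trans_eq (Measure.restrict_apply_univ T)
  have hlim : Tendsto (fun ε : ℝ => ENNReal.ofReal ε * μH[(d : ℝ)] T) (𝓝[>] 0) (𝓝 0) := by
    have : Tendsto (fun ε : ℝ => ENNReal.ofReal ε) (𝓝[>] 0) (𝓝 0) := by
      have := (ENNReal.continuous_ofReal.tendsto 0).mono_left (nhdsWithin_le_nhds (s := Ioi 0))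
      simpa using this
    simpa using ENNReal.Tendsto.mul_const this (Or.inr hTfin.ne)
  exact le_antisymm (ge_of_tendsto hlim (eventually_mem_nhdsWithin.mono fun ε hε => key ε hε)) bot_le

end Aux

section Aux2
open Set Topology

lemma aux_FDist_nonneg {n : ℕ} (μ ν : Measure (EuclideanSpace ℝ (Fin n)))
    (B : Set (EuclideanSpace ℝ (Fin n))) : 0 ≤ FDist μ ν B := by
  apply Real.sSup_nonneg
  rintro t ⟨f, -, -, -, rfl⟩
  exact abs_nonneg _

lemma aux_alphaV_nonneg (d : ℕ) {n : ℕ} (μ : Measure (EuclideanSpace ℝ (Fin n)))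
    (x : EuclideanSpace ℝ (Fin n)) {r : ℝ} (hr : 0 < r)
    (V : AffineSubspace ℝ (EuclideanSpace ℝ (Fin n))) : 0 ≤ alphaV d μ x r V := by
  apply mul_nonneg (Real.rpow_nonneg hr.le _)
  apply Real.sInf_nonneg
  rintro t ⟨c, -, rfl⟩
  exact aux_FDist_nonneg _ _ _

lemma aux_alphaA_nonneg (d : ℕ) {n : ℕ} (μ : Measure (EuclideanSpace ℝ (Fin n)))
    (x : EuclideanSpace ℝ (Fin n)) {r : ℝ} (hr : 0 < r) : 0 ≤ alphaA d μ x r := by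
  apply Real.sInf_nonneg
  rintro t ⟨V, -, -, rfl⟩
  exact aux_alphaV_nonneg d μ x hr V

lemma aux_alphaA_le (d : ℕ) {n : ℕ} (μ : Measure (EuclideanSpace ℝ (Fin n)))
    (x : EuclideanSpace ℝ (Fin n)) {r : ℝ} (hr : 0 < r)
    (V : AffineSubspace ℝ (EuclideanSpace ℝ (Fin n)))
    (hV : (V : Set (EuclideanSpace ℝ (Fin n))).Nonempty) (hVd : Module.finrank ℝ V.direction = d)
    {c : ℝ} (hc : 0 < c) {b : ℝ} (hb : 0 ≤ b)
    (h : ∀ f : EuclideanSpace ℝ (Fin n) → ℝ, LipschitzWith 1 f → (∀ x, 0 ≤ f x) →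
      Function.support f ⊆ closedBall x r →
      |(∫ y, f y ∂μ) - ∫ y, f y ∂(ENNReal.ofReal c •
            (μH[(d : ℝ)]).restrict (V : Set (EuclideanSpace ℝ (Fin n))))| ≤ b * r ^ (d + 1)) :
    alphaA d μ x r ≤ b := by
  have h1 : alphaA d μ x r ≤ alphaV d μ x r V := by
    apply csInf_le
    · refine ⟨0, ?_⟩
      rintro t ⟨V, -, -, rfl⟩
      exact aux_alphaV_nonneg d μ x hr V
    · exact ⟨V, hV, hVd, rfl⟩
  refine h1.trans ?_
  have h2 : sInf { t : ℝ | ∃ c : ℝ, 0 < c ∧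
      t = FDist μ (ENNReal.ofReal c •
            (μH[(d : ℝ)]).restrict (V : Set (EuclideanSpace ℝ (Fin n))))
          (closedBall x r) } ≤ b * r ^ (d + 1) := by
    refine le_trans (csInf_le (a := FDist μ (ENNReal.ofReal c •
            (μH[(d : ℝ)]).restrict (V : Set (EuclideanSpace ℝ (Fin n)))) (closedBall x r))
      ⟨0, ?_⟩ ⟨c, hc, rfl⟩) ?_
    · rintro t ⟨c, -, rfl⟩
      exact aux_FDist_nonneg _ _ _
    · apply Real.sSup_le
      · rintro t ⟨f, hf1, hf2, hf3, rfl⟩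
        exact h f hf1 hf2 hf3
      · positivity
  unfold alphaV
  calc _ ≤ r ^ (-(d : ℝ) - 1) * (b * r ^ (d + 1)) :=
        mul_le_mul_of_nonneg_left h2 (Real.rpow_nonneg hr.le _)
    _ = b := by
      have : r ^ (-(d : ℝ) - 1) = (r ^ (d + 1))⁻¹ := by
        rw [← Real.rpow_natCast, ← Real.rpow_neg hr.le]
        congr 1; push_cast; ring
      rw [this]
      field_simp

/-- The deterministic estimate at one scale. -/
lemma aux_scale {d n : ℕ} (hn : 1 ≤ n)
    (μ : Measure (EuclideanSpace ℝ (Fin n))) [IsLocallyFiniteMeasure μ]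
    (Γ : Set (EuclideanSpace ℝ (Fin n))) (hΓ : MeasurableSet Γ)
    (f : EuclideanSpace ℝ (Fin d) → EuclideanSpace ℝ (Fin n)) (hf : Continuous f)
    (K : Set (EuclideanSpace ℝ (Fin d)))
    (h : EuclideanSpace ℝ (Fin d) → ℝ≥0) (hh : Measurable h)
    (hhint : LocallyIntegrable (fun y => (h y : ℝ)) (μH[(d : ℝ)]))
    (ν : Measure (EuclideanSpace ℝ (Fin d)))
    (hν : ν = (μH[(d : ℝ)]).withDensity (fun y => (h y : ℝ≥0∞)))
    (hνK : ∀ᵐ y ∂ν, y ∈ K) (hmap : Measure.map f ν = μ.restrict Γ)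
    (C : ℝ≥0) (hC : ν ≤ C • (μH[(d : ℝ)]))
    (p : EuclideanSpace ℝ (Fin d))
    (A : EuclideanSpace ℝ (Fin d) →L[ℝ] EuclideanSpace ℝ (Fin n))
    (m : ℝ) (hm : 0 < m)
    (hKm : ∀ y ∈ K, dist y p ≤ m * dist (f y) (f p))
    (hAm : ∀ z, ‖z‖ ≤ m * ‖A z‖)
    (r : ℝ) (hr : 0 < r) (ε : ℝ) (hε : 0 < ε) (hε2 : ε ≤ 1 / 2)
    (h1 : μ (Γᶜ ∩ closedBall (f p) r) ≤ ENNReal.ofReal ε * μ (closedBall (f p) r))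
    (h2 : ⨍ y in closedBall p (m * r), ‖(h y : ℝ) - h p‖ ∂(μH[(d : ℝ)]) ≤ ε)
    (h3 : ∀ y ∈ closedBall p (m * r), ‖f y - f p - A (y - p)‖ ≤ ε * ‖y - p‖)
    (φ : EuclideanSpace ℝ (Fin n) → ℝ) (hφ : LipschitzWith 1 φ) (hφ0 : ∀ y, 0 ≤ φ y)
    (hφs : Function.support φ ⊆ closedBall (f p) r) :
    |(∫ y, φ y ∂μ) - h p * ∫ y, φ y ∂(Measure.map (fun y => f p + A (y - p)) (μH[(d : ℝ)]))|
      ≤ ((6 * C + h p * m + 3) * ((μH[(d : ℝ)]).real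
        (closedBall (0 : EuclideanSpace ℝ (Fin d)) 1) * m ^ d) * ε) * r ^ (d + 1) := by
  have hH := aux_isHaar d
  set lam : Measure (EuclideanSpace ℝ (Fin d)) := μH[(d : ℝ)] with hlam
  set ω := lam.real (closedBall (0 : EuclideanSpace ℝ (Fin d)) 1) with hω
  have hφ3 := aux_bound hn φ hφ (f p) hr hφs
  have hφn : ∀ y, ‖φ y‖ ≤ 3 * r := fun y => by
    rw [Real.norm_of_nonneg (hφ0 y)]; exact hφ3 y
  have hφout : ∀ y, y ∉ closedBall (f p) r → φ y = 0 := by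
    intro y hy; by_contra hne; exact hy (hφs hne)
  have hφc : Continuous φ := hφ.continuous
  have hcs : HasCompactSupport φ :=
    HasCompactSupport.intro (isCompact_closedBall (f p) r) (fun y hy => hφout y hy)
  have hint : Integrable φ μ := hφc.integrable_of_hasCompactSupport hcs
  set B := closedBall (f p) r with hB
  set Bρ := closedBall p (m * r) with hBρ
  have hmr : 0 < m * r := by positivity
  have hBρm : lam.real Bρ = ω * m ^ d * r ^ d := by
    rw [hBρ, Measure.real, Measure.addHaar_closedBall' lam p hmr.le, ENNReal.toReal_mul,
      ENNReal.toReal_ofReal (by positivity), finrank_euclideanSpace_fin, hω, Measure.real]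
    ring
  -- the part outside `Γ`
  have hsplit : ∫ y, φ y ∂μ = (∫ y in Γ, φ y ∂μ) + ∫ y in Γᶜ, φ y ∂μ :=
    (integral_add_compl hΓ hint).symm
  have hBfin : μ B < ∞ := measure_closedBall_lt_top
  have hb : μ.real (Γ ∩ B) ≤ C * (ω * m ^ d * r ^ d) := by
    have e1 : μ (Γ ∩ B) = ν (f ⁻¹' B) := by
      rw [inter_comm, ← Measure.restrict_apply (measurableSet_closedBall), ← hmap,
        Measure.map_apply hf.measurable measurableSet_closedBall]
    have e2 : ν (f ⁻¹' B) ≤ ν Bρ := by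
      apply measure_mono_ae
      filter_upwards [hνK] with y hy hyB
      have hyB' : dist (f y) (f p) ≤ r := hyB
      exact (hKm y hy).trans (by gcongr)
    have e3 : ν Bρ ≤ (C : ℝ≥0∞) * lam Bρ := by
      exact hC Bρ
    have e4 : μ (Γ ∩ B) ≤ (C : ℝ≥0∞) * lam Bρ := e1.le.trans (e2.trans e3)
    have e5 := ENNReal.toReal_mono (ENNReal.mul_ne_top ENNReal.coe_ne_top
      (measure_closedBall_lt_top (x := p) (r := m * r)).ne) e4
    rw [ENNReal.toReal_mul] at e5
    rw [← hBρm]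
    exact e5
  have ha : μ.real (Γᶜ ∩ B) ≤ 2 * ε * (C * (ω * m ^ d * r ^ d)) := by
    have e1 : μ.real (Γᶜ ∩ B) ≤ ε * μ.real B := by
      have := ENNReal.toReal_mono (ENNReal.mul_ne_top ENNReal.ofReal_ne_top hBfin.ne) h1
      rwa [ENNReal.toReal_mul, ENNReal.toReal_ofReal hε.le] at this
    have e2 : μ.real B = μ.real (Γ ∩ B) + μ.real (Γᶜ ∩ B) := by
      have := measureReal_inter_add_sdiff (μ := μ) (s := B) hΓ hBfin.ne
      rw [← this, inter_comm, sdiff_eq, inter_comm Γᶜ]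
    have e3 : 0 ≤ μ.real (Γᶜ ∩ B) := measureReal_nonneg
    rw [e2] at e1
    nlinarith
  have houter : |∫ y in Γᶜ, φ y ∂μ| ≤ 3 * r * (2 * ε * (C * (ω * m ^ d * r ^ d))) := by
    have e1 : ∫ y in Γᶜ, φ y ∂μ = ∫ y in Γᶜ ∩ B, φ y ∂μ := by
      apply setIntegral_eq_of_subset_of_forall_sdiff_eq_zero hΓ.compl inter_subset_left
      intro y hy
      exact hφout y (fun hyB => hy.2 ⟨hy.1, hyB⟩)
    rw [e1, ← Real.norm_eq_abs]
    refine (norm_setIntegral_le_of_norm_le_const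
      ((measure_mono inter_subset_right).trans_lt hBfin) (fun y _ => hφn y)).trans ?_
    gcongr
  -- the part on `Γ`
  have hin : ∫ y in Γ, φ y ∂μ = ∫ y in Bρ, (h y : ℝ) * φ (f y) ∂lam := by
    rw [← hmap, integral_map hf.aemeasurable hφc.aestronglyMeasurable]
    rw [← setIntegral_eq_integral_of_ae_compl_eq_zero (s := Bρ)]
    · rw [hν, restrict_withDensity measurableSet_closedBall,
        integral_withDensity_eq_integral_smul hh]
      rfl
    · filter_upwards [hνK] with y hy hyB
      apply hφout
      intro hfy
      apply hyB
      have hfy' : dist (f y) (f p) ≤ r := hfy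
      exact (hKm y hy).trans (by gcongr)
  have hpl : ∫ y, φ y ∂(Measure.map (fun y => f p + A (y - p)) lam)
      = ∫ y in Bρ, φ (f p + A (y - p)) ∂lam := by
    rw [integral_map (by fun_prop) hφc.aestronglyMeasurable]
    rw [← setIntegral_eq_integral_of_forall_compl_eq_zero (s := Bρ)]
    intro y hyB
    apply hφout
    intro hfy
    apply hyB
    have hfy' : ‖A (y - p)‖ ≤ r := by
      simpa [hB, dist_eq_norm] using hfy
    have := hAm (y - p)
    rw [hBρ, mem_closedBall, dist_eq_norm]
    exact this.trans (by gcongr)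
  have hhon : IntegrableOn (fun y => (h y : ℝ)) Bρ lam :=
    hhint.integrableOn_isCompact (isCompact_closedBall _ _)
  have hconst : ∀ c : ℝ, IntegrableOn (fun _ => c) Bρ lam := fun c =>
    integrableOn_const (measure_closedBall_lt_top).ne
  have i1 : IntegrableOn (fun y => (h y : ℝ) * φ (f y)) Bρ lam := by
    apply Integrable.mul_bdd (c := 3 * r) hhon (by fun_prop)
    exact Eventually.of_forall fun y => hφn _
  have i2 : IntegrableOn (fun y => (h p : ℝ) * φ (f p + A (y - p))) Bρ lam := by
    apply Integrable.const_mul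
    exact (hφc.comp (by fun_prop)).continuousOn.integrableOn_compact (isCompact_closedBall _ _)
  have i3 : IntegrableOn (fun y => ‖(h y : ℝ) - h p‖) Bρ lam := (hhon.sub (hconst _)).norm
  have hinner : |(∫ y in Bρ, (h y : ℝ) * φ (f y) ∂lam) -
      h p * ∫ y in Bρ, φ (f p + A (y - p)) ∂lam| ≤
      (h p * (ε * (m * r)) + 3 * r * ε) * (ω * m ^ d * r ^ d) := by
    rw [← integral_const_mul, ← integral_sub i1 i2, ← Real.norm_eq_abs]
    have hbd : ∀ y ∈ Bρ, ‖(h y : ℝ) * φ (f y) - h p * φ (f p + A (y - p))‖ ≤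
        h p * (ε * (m * r)) + 3 * r * ‖(h y : ℝ) - h p‖ := by
      intro y hy
      have e1 : (h y : ℝ) * φ (f y) - h p * φ (f p + A (y - p)) =
        h p * (φ (f y) - φ (f p + A (y - p))) + φ (f y) * (h y - h p) := by ring
      rw [e1]
      refine (norm_add_le _ _).trans ?_
      rw [norm_mul, norm_mul, Real.norm_of_nonneg (h p).coe_nonneg]
      have e2 : ‖φ (f y) - φ (f p + A (y - p))‖ ≤ ε * (m * r) := by
        have e3 := hφ.dist_le_mul (f y) (f p + A (y - p))
        rw [dist_eq_norm, dist_eq_norm, NNReal.coe_one, one_mul, ← sub_sub] at e3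
        refine e3.trans ((h3 y hy).trans ?_)
        have : ‖y - p‖ ≤ m * r := by rw [← dist_eq_norm]; exact hy
        gcongr
      have := hφn (f y)
      gcongr
    refine (norm_integral_le_of_norm_le (g := fun y => h p * (ε * (m * r)) + 3 * r * ‖(h y : ℝ) - h p‖) ((hconst _).add (i3.const_mul (3 * r)))
      ((ae_restrict_iff' measurableSet_closedBall).2 (Eventually.of_forall hbd))).trans ?_
    rw [integral_add (hconst _) (i3.const_mul (3 * r)), setIntegral_const, smul_eq_mul, hBρm,
      integral_const_mul]
    have e4 : ∫ y in Bρ, ‖(h y : ℝ) - h p‖ ∂lam ≤ ε * (ω * m ^ d * r ^ d) := by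
      have := measure_smul_setAverage (μ := lam) (s := Bρ) (fun y => ‖(h y : ℝ) - h p‖) (measure_closedBall_lt_top).ne
      rw [← this, hBρm, smul_eq_mul, mul_comm]
      have hω0 : 0 ≤ ω := measureReal_nonneg
      gcongr
    have e5 := mul_le_mul_of_nonneg_left e4 (by positivity : 0 ≤ 3 * r)
    linarith
  rw [hsplit, hin, hpl]
  have : ∀ a b c : ℝ, |a + b - c| ≤ |a - c| + |b| := fun a b c => by
    rw [show a + b - c = (a - c) + b by ring]; exact abs_add_le _ _
  refine (this _ _ _).trans ((add_le_add hinner houter).trans (le_of_eq ?_))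
  ring

lemma aux_point {d n : ℕ} (hn : 1 ≤ n)
    (μ : Measure (EuclideanSpace ℝ (Fin n))) [IsLocallyFiniteMeasure μ]
    (Γ : Set (EuclideanSpace ℝ (Fin n))) (hΓ : MeasurableSet Γ)
    (f : EuclideanSpace ℝ (Fin d) → EuclideanSpace ℝ (Fin n)) (hf : Continuous f)
    (K : Set (EuclideanSpace ℝ (Fin d)))
    (h : EuclideanSpace ℝ (Fin d) → ℝ≥0) (hh : Measurable h)
    (hhint : LocallyIntegrable (fun y => (h y : ℝ)) (μH[(d : ℝ)]))
    (ν : Measure (EuclideanSpace ℝ (Fin d)))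
    (hν : ν = (μH[(d : ℝ)]).withDensity (fun y => (h y : ℝ≥0∞)))
    (hνK : ∀ᵐ y ∂ν, y ∈ K) (hmap : Measure.map f ν = μ.restrict Γ)
    (C : ℝ≥0) (hC : ν ≤ C • (μH[(d : ℝ)]))
    (p : EuclideanSpace ℝ (Fin d)) (M : ℝ≥0)
    (hKM : ∀ y ∈ K, dist y p ≤ M * dist (f y) (f p))
    (hp : 0 < h p) (hd : DifferentiableAt ℝ f p) (hinj : Function.Injective (fderiv ℝ f p))
    (h1 : Tendsto (fun r => μ (Γᶜ ∩ closedBall (f p) r) / μ (closedBall (f p) r)) (𝓝[>] 0) (𝓝 0))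
    (h2 : Tendsto (fun r => ⨍ y in closedBall p r, ‖(h y : ℝ) - h p‖ ∂(μH[(d : ℝ)]))
      (𝓝[>] 0) (𝓝 0)) :
    Tendsto (fun r : ℝ => alphaA d μ (f p) r) (𝓝[>] 0) (𝓝 0) := by
  have hH := aux_isHaar d
  obtain ⟨V, hV, hVd, c, hc, hcV⟩ := aux_affine_map (fderiv ℝ f p) hinj p (f p)
  obtain ⟨M', hM', hanti⟩ := (fderiv ℝ f p).injective_iff_antilipschitz.1 hinj
  set A := fderiv ℝ f p with hA
  set m : ℝ := M + M' with hm_def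
  have hm : 0 < m := by positivity
  have hKm : ∀ y ∈ K, dist y p ≤ m * dist (f y) (f p) := fun y hy =>
    (hKM y hy).trans (by rw [hm_def]; gcongr; simp)
  have hAm : ∀ z, ‖z‖ ≤ m * ‖A z‖ := fun z => by
    have : ‖z‖ ≤ M' * ‖A z‖ := by
      have := hanti.le_mul_dist z 0
      simp only [map_zero, dist_zero_right] at this
      exact this
    refine this.trans ?_
    rw [hm_def]; gcongr; simp
  set C₀ : ℝ := (6 * C + h p * m + 3) * ((μH[(d : ℝ)]).real
        (closedBall (0 : EuclideanSpace ℝ (Fin d)) 1) * m ^ d) with hC₀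
  have hC₀0 : 0 ≤ C₀ := by positivity
  have key : ∀ ε : ℝ, 0 < ε → ε ≤ 1 / 2 → ∀ᶠ r in 𝓝[>] (0 : ℝ), alphaA d μ (f p) r ≤ C₀ * ε := by
    intro ε hε hε2
    have e1 : ∀ᶠ r in 𝓝[>] (0 : ℝ), μ (Γᶜ ∩ closedBall (f p) r) ≤
        ENNReal.ofReal ε * μ (closedBall (f p) r) := by
      filter_upwards [h1.eventually (gt_mem_nhds (ENNReal.ofReal_pos.2 hε))] with r hr
      exact (ENNReal.div_le_iff_le_mul (Or.inr ENNReal.ofReal_ne_top)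
        (Or.inl measure_closedBall_lt_top.ne)).1 hr.le
    have hscale : Tendsto (fun r => m * r) (𝓝[>] (0 : ℝ)) (𝓝[>] 0) := by
      apply tendsto_nhdsWithin_of_tendsto_nhds_of_eventually_within
      · have : Tendsto (fun r => m * r) (𝓝 (0 : ℝ)) (𝓝 (m * 0)) :=
          (continuous_const.mul continuous_id).tendsto 0
        rw [mul_zero] at this
        exact this.mono_left nhdsWithin_le_nhds
      · filter_upwards [eventually_mem_nhdsWithin] with r hr
        exact mul_pos hm hr
    have e2 := (h2.comp hscale).eventually (gt_mem_nhds hε)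
    have e3 : ∀ᶠ r in 𝓝[>] (0 : ℝ), ∀ y ∈ closedBall p (m * r),
        ‖f y - f p - A (y - p)‖ ≤ ε * ‖y - p‖ := by
      have := hd.hasFDerivAt.isLittleO.def hε
      obtain ⟨s, hs, hsub⟩ := Metric.nhds_basis_closedBall.eventually_iff.1 this
      have e4 : ∀ᶠ r in 𝓝[>] (0 : ℝ), m * r ∈ Ioc 0 s := hscale.eventually (Ioc_mem_nhdsGT hs)
      filter_upwards [e4] with r hr y hy
      exact hsub (closedBall_subset_closedBall hr.2 hy)
    filter_upwards [e1, e2, e3, eventually_mem_nhdsWithin] with r hr1 hr2 hr3 hr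
    refine aux_alphaA_le d μ (f p) hr V hV hVd (c := h p * c) (by positivity) (by positivity) ?_
    intro φ hφ hφ0 hφs
    have := aux_scale hn μ Γ hΓ f hf K h hh hhint ν hν hνK hmap C hC p A m hm hKm hAm r hr ε hε hε2
      hr1 hr2.le hr3 φ hφ hφ0 hφs
    rw [hcV, integral_smul_measure, ENNReal.toReal_ofReal hc.le] at this
    rw [integral_smul_measure, ENNReal.toReal_ofReal (by positivity), mul_smul]
    exact this
  rw [Metric.tendsto_nhds]
  intro ε hε
  have hq : 0 < min (1 / 2) (ε / (2 * (C₀ + 1))) := by positivity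
  filter_upwards [key _ hq (min_le_left _ _), eventually_mem_nhdsWithin] with r hr hr0
  rw [Real.dist_eq, sub_zero, abs_of_nonneg (aux_alphaA_nonneg d μ (f p) hr0)]
  refine hr.trans_lt ?_
  calc C₀ * min (1 / 2) (ε / (2 * (C₀ + 1))) ≤ (C₀ + 1) * (ε / (2 * (C₀ + 1))) := by
        gcongr
        · linarith
        · exact min_le_right _ _
    _ = ε / 2 := by field_simp
    _ < ε := by linarith

end Aux2

section Aux3
open Set Topology

lemma aux_piece {d n : ℕ} (hn : 1 ≤ n)
    (E : Set (EuclideanSpace ℝ (Fin n)))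
    (hloc : IsLocallyFiniteMeasure ((μH[(d : ℝ)]).restrict E))
    (f : EuclideanSpace ℝ (Fin d) → EuclideanSpace ℝ (Fin n)) (L : ℝ≥0) (hf : LipschitzWith L f)
    (K : Set (EuclideanSpace ℝ (Fin d))) (hK : MeasurableSet K) (hKE : f '' K ⊆ E)
    (M : ℝ≥0) (hM : ∀ a ∈ K, ∀ b ∈ K, dist a b ≤ M * dist (f a) (f b))
    (hdiff : ∀ a ∈ K, DifferentiableAt ℝ f a ∧ Function.Injective (fderiv ℝ f a)) :
    ∀ᵐ x ∂((μH[(d : ℝ)]).restrict (f '' K)),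
      Tendsto (fun r : ℝ => alphaA d ((μH[(d : ℝ)]).restrict E) x r) (𝓝[>] 0) (𝓝 0) := by
  have hH := aux_isHaar d
  have hinj : InjOn f K := by
    intro a ha b hb hab
    have := hM a ha b hb
    rw [hab, dist_self, mul_zero] at this
    exact dist_le_zero.1 this
  set Γ := f '' K with hΓdef
  have hΓ : MeasurableSet Γ := hK.image_of_continuousOn_injOn hf.continuous.continuousOn hinj
  obtain ⟨g, hg, hgeq⟩ : ∃ g : EuclideanSpace ℝ (Fin n) → EuclideanSpace ℝ (Fin d),
      Continuous g ∧ ∀ y ∈ K, g (f y) = y := by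
    have h1 : LipschitzOnWith M (Function.invFunOn f K) Γ := by
      apply LipschitzOnWith.of_dist_le_mul
      rintro _ ⟨a, ha, rfl⟩ _ ⟨b, hb, rfl⟩
      rw [hinj.leftInvOn_invFunOn ha, hinj.leftInvOn_invFunOn hb]
      exact hM a ha b hb
    obtain ⟨g, hg1, hg2⟩ := h1.extend_finite_dimension
    refine ⟨g, hg1.continuous, fun y hy => ?_⟩
    rw [← hg2 (mem_image_of_mem f hy), hinj.leftInvOn_invFunOn hy]
  have hfg : ∀ x ∈ Γ, f (g x) = x ∧ g x ∈ K := by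
    rintro _ ⟨y, hy, rfl⟩
    rw [hgeq y hy]; exact ⟨rfl, hy⟩
  set lam : Measure (EuclideanSpace ℝ (Fin d)) := μH[(d : ℝ)] with hlam
  set ν : Measure (EuclideanSpace ℝ (Fin d)) := Measure.map g ((μH[(d : ℝ)]).restrict Γ) with hνdef
  have hmap : Measure.map f ν = ((μH[(d : ℝ)]).restrict E).restrict Γ := by
    rw [Measure.restrict_restrict_of_subset hKE, hνdef,
      Measure.map_map hf.continuous.measurable hg.measurable]
    have : f ∘ g =ᵐ[(μH[(d : ℝ)]).restrict Γ] id := by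
      filter_upwards [ae_restrict_mem hΓ] with x hx
      exact (hfg x hx).1
    rw [Measure.map_congr this, Measure.map_id]
  have hC : ν ≤ (L ^ d) • lam := by
    rw [Measure.le_iff]
    intro S hS
    rw [hνdef, Measure.map_apply hg.measurable hS,
      Measure.restrict_apply (hg.measurable hS)]
    have h1 : g ⁻¹' S ∩ Γ ⊆ f '' S := fun x hx => ⟨g x, hx.1, (hfg x hx.2).1⟩
    refine (measure_mono h1).trans ((hf.hausdorffMeasure_image_le (by positivity) S).trans ?_)
    rw [ENNReal.rpow_natCast, ← ENNReal.coe_pow]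
    exact le_rfl
  have hνloc : IsLocallyFiniteMeasure ν := by
    have : IsLocallyFiniteMeasure ((L ^ d) • lam) := inferInstance
    exact Measure.isLocallyFiniteMeasure_of_le hC
  have hac : ν ≪ lam := by
    intro s hs
    have := hC s
    rw [Measure.smul_apply, hs, smul_zero] at this
    exact le_antisymm this bot_le
  have hνK : ∀ᵐ y ∂ν, y ∈ K := by
    rw [hνdef, ae_map_iff (p := fun y => y ∈ K) hg.aemeasurable hK]
    filter_upwards [ae_restrict_mem hΓ] with x hx
    exact (hfg x hx).2
  set h : EuclideanSpace ℝ (Fin d) → ℝ≥0 := fun y => (ν.rnDeriv lam y).toNNReal with hh_def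
  have hh : Measurable h := (Measure.measurable_rnDeriv _ _).ennreal_toNNReal
  have hν : ν = lam.withDensity (fun y => (h y : ℝ≥0∞)) := by
    conv_lhs => rw [← Measure.withDensity_rnDeriv_eq ν lam hac]
    apply withDensity_congr_ae
    filter_upwards [Measure.rnDeriv_lt_top ν lam] with y hy
    rw [hh_def]
    exact (ENNReal.coe_toNNReal hy.ne).symm
  have hhint : LocallyIntegrable (fun y => (h y : ℝ)) lam := by
    rw [locallyIntegrable_iff]
    intro k hk
    have h1 : ∫⁻ y in k, (h y : ℝ≥0∞) ∂lam ≠ ∞ := by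
      rw [← withDensity_apply _ hk.measurableSet, ← hν]
      exact hk.measure_lt_top.ne
    exact integrable_toReal_of_lintegral_ne_top (f := fun y => (h y : ℝ≥0∞)) hh.coe_nnreal_ennreal.aemeasurable h1
  have hpos : ∀ᵐ y ∂ν, 0 < h y := by
    rw [hν, ae_withDensity_iff hh.coe_nnreal_ennreal]
    refine Eventually.of_forall fun y hy => ?_
    rw [pos_iff_ne_zero]
    exact_mod_cast hy
  have hleb : ∀ᵐ y ∂ν, Tendsto (fun r => ⨍ z in closedBall y r, ‖(h z : ℝ) - h y‖ ∂lam)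
      (𝓝[>] 0) (𝓝 0) := by
    apply hac.ae_le
    filter_upwards [(Besicovitch.vitaliFamily lam).ae_tendsto_average_norm_sub hhint] with y hy
    exact hy.comp (Besicovitch.tendsto_filterAt lam y)
  have hall := ae_of_ae_map hg.aemeasurable (hpos.and hleb)
  have hbes := Besicovitch.ae_tendsto_measure_inter_div_of_measurableSet
    ((μH[(d : ℝ)]).restrict E) hΓ.compl
  have hbes' := ae_restrict_of_ae (s := Γ) hbes
  rw [Measure.restrict_restrict_of_subset hKE] at hbes'
  filter_upwards [hall, hbes', ae_restrict_mem hΓ] with x hx1 hx2 hx3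
  obtain ⟨p, hp, rfl⟩ := hx3
  rw [hgeq p hp] at hx1
  refine aux_point hn ((μH[(d : ℝ)]).restrict E) Γ hΓ f hf.continuous K h hh hhint ν hν hνK hmap
    (L ^ d) hC p M (fun y hy => hM y hy p hp) hx1.1 (hdiff p hp).1 (hdiff p hp).2 ?_ hx1.2
  have hnot : f p ∉ Γᶜ := fun hc => hc (mem_image_of_mem f hp)
  rwa [indicator_of_notMem hnot] at hx2

lemma aux_graph {d n : ℕ} (hn : 1 ≤ n)
    (E : Set (EuclideanSpace ℝ (Fin n))) (hE : MeasurableSet E)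
    (hloc : IsLocallyFiniteMeasure ((μH[(d : ℝ)]).restrict E))
    (f : EuclideanSpace ℝ (Fin d) → EuclideanSpace ℝ (Fin n)) (L : ℝ≥0) (hf : LipschitzWith L f) :
    ∀ᵐ x ∂((μH[(d : ℝ)]).restrict (E ∩ range f)),
      Tendsto (fun r : ℝ => alphaA d ((μH[(d : ℝ)]).restrict E) x r) (𝓝[>] 0) (𝓝 0) := by
  have hH := aux_isHaar d
  set G := {y | DifferentiableAt ℝ f y ∧ Function.Injective (fderiv ℝ f y)} with hG
  have hGm : MeasurableSet G := (measurableSet_of_differentiableAt ℝ f).inter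
    (measurable_fderiv ℝ f ContinuousLinearMap.isOpen_injective.measurableSet)
  have hnull1 : μH[(d : ℝ)] (f '' {y | ¬ DifferentiableAt ℝ f y}) = 0 := by
    have h1 : (μH[(d : ℝ)]) {y | ¬ DifferentiableAt ℝ f y} = 0 := hf.ae_differentiableAt
    have h2 := hf.hausdorffMeasure_image_le (d := (d : ℝ)) (by positivity)
      {y | ¬ DifferentiableAt ℝ f y}
    rw [h1, mul_zero] at h2
    exact le_antisymm h2 bot_le
  have hnull2 := aux_sard f
  have hex : ∀ A : EuclideanSpace ℝ (Fin d) →L[ℝ] EuclideanSpace ℝ (Fin n), ∃ k : ℝ≥0, k ≠ 0 ∧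
      (Function.Injective A → ∀ z, ‖z‖ ≤ k * ‖A z‖) := by
    intro A
    by_cases hA : Function.Injective A
    · obtain ⟨k, hk, hanti⟩ := A.injective_iff_antilipschitz.1 hA
      refine ⟨k, ne_of_gt hk, fun _ z => ?_⟩
      have := hanti.le_mul_dist z 0
      simp only [map_zero, dist_zero_right] at this
      exact this
    · exact ⟨1, one_ne_zero, fun h => absurd h hA⟩
  choose k hk0 hk using hex
  obtain ⟨t, A, htc, hcov, happ, hAn⟩ :=
    exists_closed_cover_approximatesLinearOn_of_hasFDerivWithinAt f G (fderiv ℝ f)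
      (fun x hx => hx.1.hasFDerivAt.hasFDerivWithinAt) (fun A => (2 * k A)⁻¹)
      (fun A => inv_ne_zero (mul_ne_zero two_ne_zero (hk0 A)))
  have hsub : E ∩ range f ⊆ (f '' {y | ¬ DifferentiableAt ℝ f y} ∪
      f '' {y | DifferentiableAt ℝ f y ∧ ¬ Function.Injective (fderiv ℝ f y)}) ∪
      ⋃ j, f '' (G ∩ t j ∩ f ⁻¹' E) := by
    rintro _ ⟨hxE, y, rfl⟩
    by_cases h1 : DifferentiableAt ℝ f y
    · by_cases h2 : Function.Injective (fderiv ℝ f y)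
      · right
        obtain ⟨j, hj⟩ := mem_iUnion.1 (hcov (show y ∈ G from ⟨h1, h2⟩))
        exact mem_iUnion.2 ⟨j, y, ⟨⟨⟨h1, h2⟩, hj⟩, hxE⟩, rfl⟩
      · left; right; exact ⟨y, ⟨h1, h2⟩, rfl⟩
    · left; left; exact ⟨y, h1, rfl⟩
  refine ae_restrict_of_ae_restrict_of_subset hsub ?_
  rw [ae_restrict_union_iff, ae_restrict_iUnion_iff]
  refine ⟨?_, fun j => ?_⟩
  · rw [Measure.restrict_eq_zero.2 (measure_union_null hnull1 hnull2)]
    simp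
  · apply aux_piece hn E hloc f L hf (G ∩ t j ∩ f ⁻¹' E)
      ((hGm.inter (htc j).measurableSet).inter (hf.continuous.measurable hE))
      (by rintro _ ⟨y, hy, rfl⟩; exact hy.2) (2 * k (A j))
    · intro a ha b hb
      obtain ⟨y, hy, hAy⟩ := hAn ⟨a, ha.1.1⟩ j
      have h1 := hk (A j) (by rw [hAy]; exact hy.2) (a - b)
      have h2 := happ j a ha.1 b hb.1
      have h3 : ‖A j (a - b)‖ ≤ ‖f a - f b‖ + ‖f a - f b - A j (a - b)‖ := by
        have := norm_sub_le (f a - f b) (f a - f b - A j (a - b))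
        simpa using this
      have hkp : (0 : ℝ) < k (A j) := by exact_mod_cast pos_iff_ne_zero.2 (hk0 (A j))
      rw [dist_eq_norm, dist_eq_norm]
      push_cast at h2 ⊢
      have h4 := mul_le_mul_of_nonneg_left (h3.trans (add_le_add_right h2 _)) hkp.le
      have h5 : (k (A j) : ℝ) * (‖f a - f b‖ + (2 * (k (A j) : ℝ))⁻¹ * ‖a - b‖)
        = k (A j) * ‖f a - f b‖ + ‖a - b‖ / 2 := by
        field_simp
      rw [h5] at h4
      linarith
    · intro a ha
      exact ha.1.1

end Aux3

open MeasureTheory Metric Filter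
open scoped ENNReal

/-- if `E ⊆ ℝ^n` is Borel with `H^d|_E` locally finite and `F ⊆ E` is
`d`-rectifiable, then `α_{H^d|_E}(x,r) → 0` as `r → 0` for `H^d`-a.e. `x ∈ F`. -/
theorem stmt4 (d n : ℕ) (hd : 1 ≤ d) (hdn : d ≤ n)
    (E : Set (EuclideanSpace ℝ (Fin n))) (hE : MeasurableSet E)
    (hloc : IsLocallyFiniteMeasure ((μH[(d : ℝ)]).restrict E))
    (F : Set (EuclideanSpace ℝ (Fin n))) (hFE : F ⊆ E) (hF : DRectifiable d F) :
    ∀ᵐ x ∂((μH[(d : ℝ)]).restrict F),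
      Tendsto (fun r : ℝ => alphaA d ((μH[(d : ℝ)]).restrict E) x r)
        (nhdsWithin 0 (Set.Ioi 0)) (nhds 0) := by
  obtain ⟨-, f, hf, hnull⟩ := hF
  have hsub : F ⊆ (F \ ⋃ i, Set.range (f i)) ∪ ⋃ i, (E ∩ Set.range (f i)) := by
    intro x hx
    by_cases h : x ∈ ⋃ i, Set.range (f i)
    · right
      obtain ⟨i, hi⟩ := Set.mem_iUnion.1 h
      exact Set.mem_iUnion.2 ⟨i, hFE hx, hi⟩
    · left; exact ⟨hx, h⟩
  refine ae_restrict_of_ae_restrict_of_subset hsub ?_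
  rw [ae_restrict_union_iff, ae_restrict_iUnion_iff]
  refine ⟨?_, fun i => ?_⟩
  · rw [Measure.restrict_eq_zero.2 hnull]
    simp
  · obtain ⟨L, hL⟩ := hf i
    exact aux_graph (hd.trans hdn) E hE hloc (f i) L hL
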